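/- arXiv:2404.10968 — 2 statements merged into one kernel-verified Lean document; each statement's English description precedes it below -/
import Mathlib

section
/- Let k be a perfect field of characteristic p > 0, let m > 2, and let 1 < a_1 ≤ a_2 ≤ … ≤ a_{m−1} be fixed integers with (a_1, a_2) ≠ (2, 2). For each integer n ≥ a_{m−1} set f_n = x_1^{a_1} + x_2^{a_2} + … + x_{m−1}^{a_{m−1}} + x_m^n ∈ k[x_1, …, x_m]. If p ≥ a_1·a_2·(a_1 + a_2 + 1/a_1 + 1/a_2 − 4)/(a_1·a_2 − a_1 − a_2) and p ≡ −1 (mod lcm(a_1, a_2)), then for every n ≥ p one has fpt(f_n) = fpt(x_1^{a_1} + x_2^{a_2} + … + x_{m−1}^{a_{m−1}} + x_m^p). -/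
open MvPolynomial Filter

/-- The `q`-th Frobenius power of the maximal ideal `(x_1, …, x_m)`. -/
noncomputable def frobeniusPower (k : Type*) [CommRing k] (m q : ℕ) :
    Ideal (MvPolynomial (Fin m) k) :=
  Ideal.span (Set.range fun i : Fin m => (X i : MvPolynomial (Fin m) k) ^ q)

/-- `ν_f(q) = max { N : f^N ∉ (x_1^q, …, x_m^q) }`. -/
noncomputable def nu {k : Type*} [CommRing k] {m : ℕ}
    (f : MvPolynomial (Fin m) k) (q : ℕ) : ℕ :=
  sSup {N : ℕ | f ^ N ∉ frobeniusPower k m q}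

lemma lucas_aux {p : ℕ} (hp : p.Prime) (n k : ℕ)
    (h1 : ¬ p ∣ (n % p).choose (k % p)) (h2 : ¬ p ∣ (n / p).choose (k / p)) :
    ¬ p ∣ n.choose k := by
  have := Fact.mk hp
  have h := Choose.choose_modEq_choose_mod_mul_choose_div_nat (n := n) (k := k) (p := p)
  intro hd
  have := (h.dvd_iff (dvd_refl p)).1 hd
  rcases hp.dvd_mul.1 this with h' | h'
  · exact h1 h'
  · exact h2 h'

lemma small_choose {p : ℕ} (hp : p.Prime) {n k : ℕ} (hn : n < p) (hk : k ≤ n) :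
    ¬ p ∣ n.choose k := by
  intro h
  have h2 : n.choose k ∣ n.factorial :=
    ⟨k.factorial * (n - k).factorial, by rw [← Nat.choose_mul_factorial_mul_factorial hk]; ring⟩
  have := (hp.dvd_factorial).1 (h.trans h2)
  omega

lemma choose_A {p : ℕ} (hp : p.Prime) {t t' : ℕ} (ht : t + t' < p) (e : ℕ) :
    ∀ u v : ℕ, u + v + 1 = p ^ e → ¬ p ∣ ((t + t') * p ^ e + (u + v)).choose (t * p ^ e + u) := by
  have hp0 := hp.pos
  induction e with
  | zero =>
    intro u v h
    have hu : u = 0 := by simp at h; omega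
    have hv : v = 0 := by simp at h; omega
    subst hu; subst hv
    simpa using small_choose hp ht (Nat.le_add_right t t')
  | succ e ih =>
    intro u v h
    have hu := Nat.div_add_mod u p
    have hv := Nat.div_add_mod v p
    have hum := Nat.mod_lt u hp0
    have hvm := Nat.mod_lt v hp0
    set u1 := u / p
    set u0 := u % p
    set v1 := v / p
    set v0 := v % p
    have hQ : 0 < p ^ e := pow_pos hp0 e
    have e1 : p * (u1 + v1) + (u0 + v0 + 1) = p * p ^ e := by
      rw [← pow_succ', ← h, ← hu, ← hv]; ring
    have hd : p ∣ u0 + v0 + 1 := by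
      have : p ∣ p * (u1 + v1) + (u0 + v0 + 1) := e1 ▸ dvd_mul_right _ _
      exact (Nat.dvd_add_right (dvd_mul_right _ _)).1 this
    obtain ⟨c, hc⟩ := hd
    have hc1 : c = 1 := by
      have h1 : c < 2 := by
        by_contra hcon
        have : p * 2 ≤ p * c := Nat.mul_le_mul_left _ (by omega)
        omega
      have h2 : c ≠ 0 := by rintro rfl; omega
      omega
    subst hc1
    have e2 : u1 + v1 + 1 = p ^ e := by
      have : p * (u1 + v1 + 1) = p * p ^ e := by rw [← e1, hc]; ring
      exact Nat.eq_of_mul_eq_mul_left hp0 this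
    have hN : (t + t') * p ^ (e + 1) + (u + v) = (u0 + v0) + p * ((t + t') * p ^ e + (u1 + v1)) := by
      rw [← hu, ← hv]; ring
    have hK : t * p ^ (e + 1) + u = u0 + p * (t * p ^ e + u1) := by
      rw [← hu]; ring
    have hlt : u0 + v0 < p := by omega
    rw [hN, hK]
    apply lucas_aux hp
    · rw [Nat.add_mul_mod_self_left, Nat.add_mul_mod_self_left, Nat.mod_eq_of_lt hlt,
        Nat.mod_eq_of_lt hum]
      exact small_choose hp hlt (by omega)
    · rw [Nat.add_mul_div_left _ _ hp0, Nat.add_mul_div_left _ _ hp0, Nat.div_eq_of_lt hlt,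
        Nat.div_eq_of_lt hum, zero_add, zero_add]
      exact ih _ _ e2

lemma choose_B {p : ℕ} (hp : p.Prime) {t t' : ℕ} (ht : t + t' < p) (e : ℕ) :
    ∀ v : ℕ, v < p ^ e → ¬ p ∣ ((t + t') * p ^ e + v).choose (t * p ^ e) := by
  have hp0 := hp.pos
  induction e with
  | zero =>
    intro v h
    have hv : v = 0 := by simp at h; omega
    subst hv
    simpa using small_choose hp ht (Nat.le_add_right t t')
  | succ e ih =>
    intro v h
    have hv := Nat.div_add_mod v p
    have hvm := Nat.mod_lt v hp0
    have h1 : v / p < p ^ e := by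
      apply Nat.div_lt_of_lt_mul
      rwa [pow_succ'] at h
    set v1 := v / p
    set v0 := v % p
    have hN : (t + t') * p ^ (e + 1) + v = v0 + p * ((t + t') * p ^ e + v1) := by
      rw [← hv]; ring
    have hK : t * p ^ (e + 1) = 0 + p * (t * p ^ e) := by ring
    rw [hN, hK]
    apply lucas_aux hp
    · rw [Nat.add_mul_mod_self_left, Nat.add_mul_mod_self_left, Nat.mod_eq_of_lt hvm, Nat.zero_mod]
      simpa using hp.one_lt.ne'
    · rw [Nat.add_mul_div_left _ _ hp0, Nat.add_mul_div_left _ _ hp0, Nat.div_eq_of_lt hvm,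
        Nat.zero_div, zero_add, zero_add]
      exact ih _ h1

lemma multi_C {p : ℕ} (hp : p.Prime) {ι : Type*} [DecidableEq ι] (t : ι → ℕ) (e : ℕ)
    (s : Finset ι) (hs : ∑ i ∈ s, t i < p) :
    ¬ p ∣ Nat.multinomial s (fun i => t i * p ^ e) := by
  induction s using Finset.induction_on with
  | empty => simpa using hp.one_lt.ne'
  | insert a s ha ih =>
    rw [Finset.sum_insert ha] at hs
    rw [Nat.multinomial_insert ha]
    intro h
    rcases hp.dvd_mul.1 h with h | h
    · have := choose_B hp hs e 0 (pow_pos hp.pos e)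
      apply this
      rw [← Finset.sum_mul, ← add_mul] at h
      simpa using h
    · exact ih (by omega) h

lemma multi_D {p : ℕ} (hp : p.Prime) {ι : Type*} [DecidableEq ι] [Fintype ι] (t k : ι → ℕ) (e : ℕ)
    (i0 i1 : ι) (h01 : i0 ≠ i1) (hs : ∑ i, t i < p) (u v : ℕ) (huv : u + v + 1 = p ^ e)
    (hk0 : k i0 = t i0 * p ^ e + u) (hk1 : k i1 = t i1 * p ^ e + v)
    (hk : ∀ i, i ≠ i0 → i ≠ i1 → k i = t i * p ^ e) :
    ∑ i, k i = (∑ i, t i) * p ^ e + (u + v) ∧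
    ¬ p ∣ Nat.multinomial Finset.univ k := by
  set r : Finset ι := (Finset.univ.erase i0).erase i1 with hr
  have hi1 : i1 ∉ r := by simp [hr]
  have hi0 : i0 ∉ insert i1 r := by simp [hr, h01]
  have huniv : (Finset.univ : Finset ι) = insert i0 (insert i1 r) := by
    ext i; simp [hr]; tauto
  have hkr : ∀ i ∈ r, k i = t i * p ^ e := by
    intro i hi
    simp [hr] at hi
    exact hk i hi.2 hi.1
  have hsumr : ∑ i ∈ r, k i = (∑ i ∈ r, t i) * p ^ e := by
    rw [Finset.sum_congr rfl hkr, Finset.sum_mul]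
  rw [huniv, Finset.sum_insert hi0, Finset.sum_insert hi1] at hs
  rw [huniv, Finset.sum_insert hi0, Finset.sum_insert hi1, Finset.sum_insert hi0,
    Finset.sum_insert hi1, Nat.multinomial_insert hi0, Nat.multinomial_insert hi1,
    Finset.sum_insert hi1, hsumr, hk0, hk1]
  refine ⟨by ring, ?_⟩
  intro h
  rcases hp.dvd_mul.1 h with h | h
  · apply choose_A hp hs e u v huv
    convert h using 2
    ring
  rcases hp.dvd_mul.1 h with h | h
  · have := choose_B (t := ∑ i ∈ r, t i) (t' := t i1) hp (by omega) e v (by omega)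
    apply this
    rw [Nat.choose_symm_of_eq_add (b := t i1 * p ^ e + v) (by ring)]
    convert h using 2
    ring
  · rw [Nat.multinomial_congr hkr] at h
    exact multi_C hp t e r (by omega) h

lemma exists_sub {ι : Type*} [DecidableEq ι] [Fintype ι] (d : ι → ℕ) (T : ℕ) (hT : T ≤ ∑ i, d i) :
    ∃ t : ι → ℕ, (∀ i, t i ≤ d i) ∧ ∑ i, t i = T := by
  induction T with
  | zero => exact ⟨fun _ => 0, by simp, by simp⟩
  | succ T ih =>
    obtain ⟨t, ht, hs⟩ := ih (by omega)
    have : ∃ i ∈ Finset.univ, t i < d i := by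
      apply Finset.exists_lt_of_sum_lt
      omega
    obtain ⟨i, -, hi⟩ := this
    refine ⟨t + Pi.single i 1, ?_, ?_⟩
    · intro j
      by_cases hj : j = i
      · subst hj; simp; omega
      · simpa [hj] using ht j
    · simp [Finset.sum_add_distrib, hs]

section
variable {k : Type*} [Field k] {m : ℕ}

lemma coeff_zero_of_mem {q : ℕ} {g : MvPolynomial (Fin m) k} (hg : g ∈ frobeniusPower k m q)
    (s : Fin m →₀ ℕ) (hs : ∀ i, s i < q) : coeff s g = 0 := by
  unfold frobeniusPower at hg
  rw [Ideal.mem_span_range_iff_exists_fun] at hg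
  obtain ⟨c, rfl⟩ := hg
  rw [coeff_sum]
  apply Finset.sum_eq_zero
  intro i _
  rw [X_pow_eq_monomial, coeff_mul_monomial', if_neg]
  intro h
  have := h i
  simp at this
  have := hs i
  omega

lemma pow_eq (b : Fin m → ℕ) (N : ℕ) :
    (∑ i : Fin m, (X i : MvPolynomial (Fin m) k) ^ b i) ^ N =
    ∑ κ ∈ Finset.piAntidiag Finset.univ N,
      monomial (Finsupp.equivFunOnFinite.symm (fun i => b i * κ i))
        ((Nat.multinomial Finset.univ κ : ℕ) : k) := by
  rw [Finset.sum_pow_eq_sum_piAntidiag]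
  apply Finset.sum_congr rfl
  intro κ _
  rw [monomial_eq, Finsupp.prod_fintype _ _ (by simp)]
  simp [pow_mul]

lemma not_mem_frob (p : ℕ) [CharP k p] (b : Fin m → ℕ) (hb : ∀ i, 0 < b i) (q : ℕ) (κ : Fin m → ℕ)
    (hκ : ∀ i, b i * κ i < q) (hmul : ¬ p ∣ Nat.multinomial Finset.univ κ) :
    (∑ i : Fin m, (X i : MvPolynomial (Fin m) k) ^ b i) ^ (∑ i, κ i) ∉ frobeniusPower k m q := by
  intro h
  have h1 := coeff_zero_of_mem h (Finsupp.equivFunOnFinite.symm (fun i => b i * κ i))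
    (by simpa using hκ)
  rw [pow_eq, coeff_sum, Finset.sum_eq_single κ] at h1
  · rw [coeff_monomial, if_pos rfl] at h1
    exact hmul ((CharP.cast_eq_zero_iff k p _).1 h1)
  · intro κ' _ hne
    rw [coeff_monomial, if_neg]
    intro heq
    apply hne
    have := Finsupp.equivFunOnFinite.symm.injective heq
    funext i
    have := congrFun this i
    exact Nat.eq_of_mul_eq_mul_left (hb i) this
  · intro hn
    simp at hn

lemma mem_frob_succ (b : Fin m → ℕ) (p : ℕ) (hp : 0 < p) (hb : ∀ i, 0 < b i) :
    (∑ i : Fin m, (X i : MvPolynomial (Fin m) k) ^ b i) ^ (∑ i, (p - 1) / b i + 1)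
      ∈ frobeniusPower k m p := by
  rw [Finset.sum_pow_eq_sum_piAntidiag]
  apply Ideal.sum_mem
  intro κ hκ
  apply Ideal.mul_mem_left
  have hsum : ∑ i, κ i = ∑ i, (p - 1) / b i + 1 := by
    simpa using hκ
  have : ∃ i ∈ Finset.univ, (p - 1) / b i < κ i := by
    apply Finset.exists_lt_of_sum_lt
    omega
  obtain ⟨i, hi, hlt⟩ := this
  rw [Nat.div_lt_iff_lt_mul (hb i)] at hlt
  rw [← Finset.mul_prod_erase _ _ hi]
  apply Ideal.mul_mem_right
  rw [← pow_mul]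
  exact Ideal.pow_mem_of_pow_mem _ (Ideal.subset_span ⟨i, rfl⟩) (by rw [mul_comm]; omega)

lemma mem_frob_p (b : Fin m → ℕ) (p : ℕ) (hp : p.Prime) [CharP k p] (hb : ∀ i, 0 < b i) :
    (∑ i : Fin m, (X i : MvPolynomial (Fin m) k) ^ b i) ^ p
      ∈ frobeniusPower k m p := by
  have := Fact.mk hp
  rw [sum_pow_char]
  apply Ideal.sum_mem
  intro i _
  rw [← pow_mul]
  exact Ideal.pow_mem_of_pow_mem _ (Ideal.subset_span ⟨i, rfl⟩) (Nat.le_mul_of_pos_left _ (hb i))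

lemma frob_lift (p : ℕ) (hp : p.Prime) [CharP k p] (e : ℕ) (g : MvPolynomial (Fin m) k)
    (hg : g ∈ frobeniusPower k m p) : g ^ (p ^ e) ∈ frobeniusPower k m (p ^ (e + 1)) := by
  have := Fact.mk hp
  unfold frobeniusPower at hg
  rw [Ideal.mem_span_range_iff_exists_fun] at hg
  obtain ⟨c, rfl⟩ := hg
  rw [sum_pow_char_pow]
  apply Ideal.sum_mem
  intro i _
  rw [mul_pow, ← pow_mul, ← pow_succ']
  exact Ideal.mul_mem_left _ _ (Ideal.subset_span ⟨i, rfl⟩)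

lemma nu_formula (p : ℕ) (hp : p.Prime) [CharP k p] (b : Fin m → ℕ) (hb : ∀ i, 0 < b i)
    (i0 i1 : Fin m) (h01 : i0 ≠ i1) (hb0 : 2 ≤ b i0) (hb1 : 3 ≤ b i1)
    (hd0 : b i0 ∣ p + 1) (hd1 : b i1 ∣ p + 1) (e : ℕ) (he : 1 ≤ e) :
    nu (∑ i : Fin m, (X i : MvPolynomial (Fin m) k) ^ b i) (p ^ (e + 1)) =
      (min (∑ i, (p - 1) / b i) (p - 1) + 1) * p ^ e - 1 := by
  have hp0 := hp.pos
  have hp2 := hp.two_le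
  set T := min (∑ i, (p - 1) / b i) (p - 1) with hT
  have hTp : T < p := by omega
  have hQ2 : 2 ≤ p ^ e := hp2.trans (Nat.le_self_pow (by omega) p)
  apply IsGreatest.csSup_eq
  constructor
  · obtain ⟨t, ht, hts⟩ := exists_sub (fun i => (p - 1) / b i) T (min_le_left _ _)
    set Q := p ^ e with hQ
    obtain ⟨u, v, huv, hu, hv⟩ : ∃ u v, u + v + 1 = Q ∧ 2 * u + 1 ≤ Q ∧ 2 * v ≤ Q :=
      ⟨(Q - 1) / 2, Q - 1 - (Q - 1) / 2, by omega, by omega, by omega⟩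
    let κ : Fin m → ℕ := fun i => if i = i0 then t i * Q + u else
      if i = i1 then t i * Q + v else t i * Q
    have hκ0 : κ i0 = t i0 * Q + u := by simp [κ]
    have hκ1 : κ i1 = t i1 * Q + v := by simp [κ, h01.symm]
    have hκ : ∀ i, i ≠ i0 → i ≠ i1 → κ i = t i * Q := by
      intro i h h'; simp [κ, h, h']
    obtain ⟨hsum, hmul⟩ := multi_D hp t κ e i0 i1 h01 (by omega) u v huv hκ0 hκ1 hκ
    have hN : (T + 1) * Q - 1 = ∑ i, κ i := by
      rw [hsum, hts, ← hQ, add_mul]; omega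
    show _ ∉ _
    rw [hN]
    apply not_mem_frob p b hb _ κ _ hmul
    have key : ∀ i, 2 ≤ b i → b i ∣ p + 1 → b i * t i + b i ≤ p + 1 := by
      rintro i h2 ⟨c, hc⟩
      have h3 := Nat.mul_le_mul_left (b i) (ht i)
      have h4 : (p - 1) / b i < c := by
        rw [Nat.div_lt_iff_lt_mul (hb i), mul_comm]; omega
      have h5 : b i * (t i + 1) ≤ b i * c := Nat.mul_le_mul_left _ (by have := ht i; omega)
      rw [hc]; linarith
    intro i
    rw [pow_succ', ← hQ]
    by_cases hi0 : i = i0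
    · subst hi0
      have := key i hb0 hd0
      rw [hκ0]
      generalize b i = B at *
      generalize t i = τ at *
      nlinarith [Nat.mul_le_mul_right Q this, Nat.mul_le_mul_right Q hb0, Nat.mul_le_mul_left B hu]
    by_cases hi1 : i = i1
    · subst hi1
      have := key i (by omega) hd1
      rw [hκ1]
      generalize b i = B at *
      generalize t i = τ at *
      nlinarith [Nat.mul_le_mul_right Q this, Nat.mul_le_mul_right Q hb1, Nat.mul_le_mul_left B hv]
    · rw [hκ i hi0 hi1, ← mul_assoc]
      apply Nat.mul_lt_mul_of_pos_right _ (by omega)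
      have h3 := Nat.mul_le_mul_left (b i) (ht i)
      have h4 := Nat.mul_div_le (p - 1) (b i)
      omega
  · intro N hN
    by_contra hcon
    apply hN
    have hle : (T + 1) * p ^ e ≤ N := by omega
    apply Ideal.pow_mem_of_pow_mem _ _ hle
    rw [pow_mul]
    apply frob_lift p hp
    rcases le_total (∑ i, (p - 1) / b i) (p - 1) with h | h
    · rw [hT, min_eq_left h]
      exact mem_frob_succ b p hp0 hb
    · rw [hT, min_eq_right h, Nat.sub_add_cancel hp0]
      exact mem_frob_p b p hp hb

end

/-- Theorem (stabilization): under the hypotheses of Theorem `stmt0`, for every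
`n ≥ p` one has `fpt(f_n) = fpt(x_1^{a_1} + … + x_{m-1}^{a_{m-1}} + x_m^p)`.
Here `F` is the F-pure threshold of `f_n` and `G` is the F-pure threshold of the
polynomial with last exponent `p`, each characterized as the limit of
`ν(p^e)/p^e`. -/
theorem stmt1 {p m n : ℕ} (hp : p.Prime) {k : Type*} [Field k] [PerfectField k]
    [CharP k p] (hm : 2 < m) (a : ℕ → ℕ)
    (ha0 : 1 < a 0)
    (hmono : ∀ i j : ℕ, i ≤ j → j ≤ m - 2 → a i ≤ a j)
    (hne : ¬(a 0 = 2 ∧ a 1 = 2))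
    (hn : a (m - 2) ≤ n)
    (hpge : ((a 0 : ℚ) * a 1 * ((a 0 : ℚ) + (a 1 : ℚ) + 1 / (a 0 : ℚ) + 1 / (a 1 : ℚ) - 4)) /
        ((a 0 : ℚ) * (a 1 : ℚ) - (a 0 : ℚ) - (a 1 : ℚ)) ≤ (p : ℚ))
    (hpmod : (p : ℤ) ≡ -1 [ZMOD (Nat.lcm (a 0) (a 1) : ℤ)])
    (hnp : p ≤ n)
    (F G : ℚ)
    (hF : Tendsto (fun e : ℕ =>
        (nu (∑ i : Fin m, (X i : MvPolynomial (Fin m) k) ^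
            (if (i : ℕ) = m - 1 then n else a (i : ℕ))) (p ^ (e + 1)) : ℝ) /
          (p : ℝ) ^ (e + 1))
      atTop (nhds (F : ℝ)))
    (hG : Tendsto (fun e : ℕ =>
        (nu (∑ i : Fin m, (X i : MvPolynomial (Fin m) k) ^
            (if (i : ℕ) = m - 1 then p else a (i : ℕ))) (p ^ (e + 1)) : ℝ) /
          (p : ℝ) ^ (e + 1))
      atTop (nhds (G : ℝ))) :
    F = G := by
  have h1 : a 0 ≤ a 1 := hmono 0 1 (by omega) (by omega)
  have hd : ((Nat.lcm (a 0) (a 1) : ℕ) : ℤ) ∣ ((p + 1 : ℕ) : ℤ) := by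
    have := hpmod.symm.dvd
    simpa using this
  have hd' : Nat.lcm (a 0) (a 1) ∣ p + 1 := Int.natCast_dvd_natCast.1 hd
  have hform : ∀ c : ℕ, p ≤ c → ∀ e : ℕ, 1 ≤ e →
      nu (∑ i : Fin m, (X i : MvPolynomial (Fin m) k) ^
            (if (i : ℕ) = m - 1 then c else a (i : ℕ))) (p ^ (e + 1)) =
      (min (∑ i : Fin m, (p - 1) / (if (i : ℕ) = m - 1 then c else a (i : ℕ))) (p - 1) + 1)
        * p ^ e - 1 := by
    intro c hc e he
    have hp0 := hp.pos
    have e0 : ¬ (0 = m - 1) := by omega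
    have e1 : ¬ (1 = m - 1) := by omega
    apply nu_formula p hp (fun i : Fin m => if (i : ℕ) = m - 1 then c else a (i : ℕ)) _
      ⟨0, by omega⟩ ⟨1, by omega⟩ (by simp) _ _ _ _ e he
    · intro i
      split_ifs with h
      · omega
      · have := hmono 0 i (by omega) (by omega)
        omega
    · simp only [if_neg e0]; omega
    · simp only [if_neg e1]; omega
    · simp only [if_neg e0]; exact (Nat.dvd_lcm_left _ _).trans hd'
    · simp only [if_neg e1]; exact (Nat.dvd_lcm_right _ _).trans hd'
  have hsum : ∀ c : ℕ, p ≤ c →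
      ∑ i : Fin m, (p - 1) / (if (i : ℕ) = m - 1 then c else a (i : ℕ)) =
      ∑ i : Fin m, (if (i : ℕ) = m - 1 then 0 else (p - 1) / a (i : ℕ)) := by
    intro c hc
    apply Finset.sum_congr rfl
    intro i _
    have hp0 := hp.pos
    split_ifs with h
    · exact Nat.div_eq_of_lt (by omega)
    · rfl
  have hFG : (F : ℝ) = (G : ℝ) := by
    refine tendsto_nhds_unique_of_eventuallyEq hF hG ?_
    filter_upwards [eventually_ge_atTop 1] with e he
    rw [hform n hnp e he, hform p le_rfl e he, hsum n hnp, hsum p le_rfl]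
  exact_mod_cast hFG
end

section
/- Let k be a perfect field of characteristic p > 0, let m > 2, and let 1 < a ≤ b be fixed integers with (a, b) ≠ (2, 2). For an integer n ≥ b set f_n = x_1^a + x_2^b + x_3^n + x_4^n + … + x_m^n ∈ k[x_1, …, x_m]. Suppose p ≡ 1 (mod lcm(a, b)) and p^d ≤ n < p^{d+1} for some positive integer d. Then either fpt(f_n) = 1/a + 1/b + (m−2)/n, or there exists an integer L ≥ d such that fpt(f_n) = ⟨1/a⟩_L + ⟨1/b⟩_L + (m−2)·⟨1/n⟩_L + p^{−L}, and in the latter case the denominator of fpt(f_n) in lowest terms is p^L. -/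
open MvPolynomial Filter

/-- The `e`-th truncation `⟨α⟩_e` of the nonterminating base-`p` expansion of
`α ∈ ℚ ∩ (0,1]`: explicitly `⟨α⟩_e = (⌈p^e α⌉ - 1)/p^e`. -/
noncomputable def trunc (p : ℕ) (α : ℚ) (e : ℕ) : ℚ :=
  ((⌈(p : ℚ) ^ e * α⌉ : ℚ) - 1) / (p : ℚ) ^ e

theorem mult_good {ι : Type*} [Fintype ι] {p : ℕ} (hp : p.Prime) (k : ι → ℕ) :
    ¬ p ∣ Nat.multinomial Finset.univ k ↔ ∀ t, ∑ i, k i / p ^ t = (∑ i, k i) / p ^ t := by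
  classical
  have := Fact.mk hp
  have hle : ∀ t, ∑ i, k i / p ^ t ≤ (∑ i, k i) / p ^ t := by
    intro t
    rw [Nat.le_div_iff_mul_le (pow_pos hp.pos t), Finset.sum_mul]
    exact Finset.sum_le_sum fun i _ => Nat.div_mul_le_self _ _
  set b := (∑ i, k i) + 1 with hb
  have hlog : ∀ n, n < b → Nat.log p n < b := fun n hn =>
    lt_of_le_of_lt (Nat.log_le_self p n) hn
  have hki : ∀ i, k i < b := fun i =>
    Nat.lt_succ_of_le (Finset.single_le_sum (f := k) (fun _ _ => Nat.zero_le _) (Finset.mem_univ i))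
  have hne : Nat.multinomial Finset.univ k ≠ 0 := (Nat.multinomial_pos _ _).ne'
  have hprodne : (∏ i, (k i).factorial) ≠ 0 :=
    Finset.prod_ne_zero_iff.mpr fun i _ => Nat.factorial_ne_zero _
  have hprod : padicValNat p (∏ i, (k i).factorial) = ∑ i, padicValNat p (k i).factorial := by
    induction (Finset.univ : Finset ι) using Finset.induction_on with
    | empty => simp
    | insert a s has ih =>
      rw [Finset.prod_insert has, Finset.sum_insert has, padicValNat.mul (Nat.factorial_ne_zero _)
        (Finset.prod_ne_zero_iff.mpr fun i _ => Nat.factorial_ne_zero _), ih]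
  have hspec := congrArg (padicValNat p) (Nat.multinomial_spec Finset.univ k)
  rw [padicValNat.mul hprodne hne, hprod, padicValNat_factorial (hlog _ (Nat.lt_succ_self _)),
    Finset.sum_congr rfl (fun i _ => padicValNat_factorial (hlog _ (hki i))),
    Finset.sum_comm] at hspec
  have h0 : ¬ p ∣ Nat.multinomial Finset.univ k ↔ padicValNat p (Nat.multinomial Finset.univ k) = 0 := by
    rw [padicValNat.eq_zero_iff]
    have := hp.ne_one
    tauto
  rw [h0]
  have h1 : padicValNat p (Nat.multinomial Finset.univ k) = 0 ↔
      ∑ t ∈ Finset.Ico 1 b, ∑ i, k i / p ^ t = ∑ t ∈ Finset.Ico 1 b, (∑ i, k i) / p ^ t := by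
    omega
  rw [h1, Finset.sum_eq_sum_iff_of_le (fun t _ => hle t)]
  constructor
  · intro h t
    by_cases ht : t = 0
    · subst ht; simp
    by_cases htb : t < b
    · exact h t (Finset.mem_Ico.mpr ⟨by omega, htb⟩)
    · have : (∑ i, k i) / p ^ t = 0 := by
        apply Nat.div_eq_of_lt
        have := Nat.lt_pow_self hp.one_lt (n := t)
        omega
      have := hle t
      omega
  · intro h t _
    exact h t

theorem good_step {ι : Type*} [Fintype ι] {p : ℕ} (hp : 0 < p) (K r : ι → ℕ)
    (hK : ∀ t, ∑ i, K i / p ^ t = (∑ i, K i) / p ^ t) (hr : ∑ i, r i < p) :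
    ∀ t, ∑ i, (p * K i + r i) / p ^ t = (∑ i, (p * K i + r i)) / p ^ t := by
  intro t
  have hri : ∀ i, r i < p := fun i => lt_of_le_of_lt
    (Finset.single_le_sum (f := r) (fun _ _ => Nat.zero_le _) (Finset.mem_univ i)) hr
  cases t with
  | zero => simp
  | succ t =>
    have e : ∀ x y, y < p → (p * x + y) / p ^ (t+1) = x / p ^ t := by
      intro x y hy
      rw [pow_succ', ← Nat.div_div_eq_div_mul, Nat.mul_add_div hp, Nat.div_eq_of_lt hy, add_zero]
    rw [Finset.sum_add_distrib, ← Finset.mul_sum, e _ _ hr, ← hK t]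
    exact Finset.sum_congr rfl fun i _ => e _ _ (hri i)

theorem not_mem_iff {p m : ℕ} {k : Type*} [Field k] [CharP k p] (A : Fin m → ℕ)
    (hA : ∀ i, 0 < A i) (q N : ℕ) :
    (∑ i : Fin m, (X i : MvPolynomial (Fin m) k) ^ A i) ^ N ∉ frobeniusPower k m q ↔
      ∃ c : Fin m → ℕ, ∑ i, c i = N ∧ (∀ i, A i * c i < q) ∧
        ¬ p ∣ Nat.multinomial Finset.univ c := by
  classical
  have hspan : frobeniusPower k m q = Ideal.span ((fun s => monomial s (1:k)) ''
      (Set.range fun i : Fin m => Finsupp.single i q)) := by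
    unfold frobeniusPower
    congr 1
    rw [← Set.range_comp]
    congr 1
    funext i
    simp [X_pow_eq_monomial]
  have hpow : (∑ i : Fin m, (X i : MvPolynomial (Fin m) k) ^ A i) ^ N =
      ∑ c ∈ Finset.piAntidiag Finset.univ N,
        monomial (Finsupp.equivFunOnFinite.symm fun i => A i * c i)
          ((Nat.multinomial Finset.univ c : ℕ) : k) := by
    rw [Finset.sum_pow_eq_sum_piAntidiag]
    refine Finset.sum_congr rfl fun c _ => ?_
    rw [monomial_eq, Finsupp.prod_fintype _ _ (by simp)]
    simp [pow_mul]
  have hcoeff : ∀ c : Fin m → ℕ, ∑ i, c i = N →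
      coeff (Finsupp.equivFunOnFinite.symm fun i => A i * c i)
        ((∑ i : Fin m, (X i : MvPolynomial (Fin m) k) ^ A i) ^ N) =
        ((Nat.multinomial Finset.univ c : ℕ) : k) := by
    intro c hc
    rw [hpow, coeff_sum, Finset.sum_eq_single c]
    · simp
    · intro c' _ hne
      rw [coeff_monomial, if_neg]
      intro h
      apply hne
      funext i
      have := congrFun (Finsupp.equivFunOnFinite.symm.injective h) i
      exact Nat.eq_of_mul_eq_mul_left (hA i) this
    · intro h
      exact absurd (by simp [hc]) h
  rw [hspan, mem_ideal_span_monomial_image]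
  push Not
  constructor
  · rintro ⟨s, hs, hlt⟩
    have hs' := hs
    rw [mem_support_iff, hpow, coeff_sum] at hs'
    obtain ⟨c, hc, hc0⟩ := Finset.exists_ne_zero_of_sum_ne_zero hs'
    rw [coeff_monomial] at hc0
    have hsc : (Finsupp.equivFunOnFinite.symm fun i => A i * c i) = s := by
      by_contra h; simp [h] at hc0
    rw [if_pos hsc] at hc0
    refine ⟨c, by simpa using hc, ?_, ?_⟩
    · intro i
      have := hlt _ ⟨i, rfl⟩
      rw [Finsupp.single_le_iff] at this
      rw [← hsc] at this
      simpa using this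
    · rwa [← CharP.cast_eq_zero_iff k p]
  · rintro ⟨c, hc, hlt, hnd⟩
    refine ⟨Finsupp.equivFunOnFinite.symm fun i => A i * c i, ?_, ?_⟩
    · rw [mem_support_iff, hcoeff c hc]
      rwa [Ne, CharP.cast_eq_zero_iff k p]
    · rintro _ ⟨i, rfl⟩
      rw [Finsupp.single_le_iff]
      simpa using hlt i

theorem K_step {p : ℕ} (hp : 0 < p) (a e : ℕ) :
    (p ^ (e + 1) - 1) / a / p = (p ^ e - 1) / a := by
  rw [Nat.div_div_eq_div_mul, mul_comm a p, ← Nat.div_div_eq_div_mul]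
  congr 1
  have h1 : 0 < p ^ e := pow_pos hp e
  obtain ⟨x, hx⟩ : ∃ x, p ^ e = x + 1 := ⟨p ^ e - 1, by omega⟩
  have : p ^ (e + 1) - 1 = p * x + (p - 1) := by
    rw [pow_succ', hx, mul_add]; omega
  rw [this, hx, Nat.mul_add_div hp, Nat.div_eq_of_lt (by omega)]
  omega

theorem K_div {p : ℕ} (hp : 0 < p) (a e t : ℕ) :
    (p ^ (e + t) - 1) / a / p ^ t = (p ^ e - 1) / a := by
  induction t with
  | zero => simp
  | succ t ih =>
    rw [pow_succ', ← Nat.div_div_eq_div_mul, ← add_assoc, K_step hp, ih]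

theorem le_K_iff {p : ℕ} (hp : 0 < p) {a : ℕ} (ha : 0 < a) (e c : ℕ) :
    a * c < p ^ e ↔ c ≤ (p ^ e - 1) / a := by
  rw [Nat.le_div_iff_mul_le ha, mul_comm]
  have h1 : 0 < p ^ e := pow_pos hp e
  omega

theorem exists_sub_sum {ι : Type*} [Fintype ι] (c : ι → ℕ) (n : ℕ) (hn : n ≤ ∑ i, c i) :
    ∃ r : ι → ℕ, (∀ i, r i ≤ c i) ∧ ∑ i, r i = n := by
  classical
  induction n with
  | zero => exact ⟨fun _ => 0, by simp, by simp⟩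
  | succ n ih =>
    obtain ⟨r, hr, hs⟩ := ih (by omega)
    obtain ⟨j, _, hj⟩ := Finset.exists_lt_of_sum_lt (s := Finset.univ) (f := r) (g := c) (by omega)
    refine ⟨fun i => r i + if i = j then 1 else 0, ?_, ?_⟩
    · intro i
      by_cases h : i = j
      · subst h; simpa using hj
      · simpa [h] using hr i
    · rw [Finset.sum_add_distrib, hs]; simp

theorem good_K {ι : Type*} [Fintype ι] {p : ℕ} (hp : 0 < p) (A : ι → ℕ) (L : ℕ)
    (hL : ∀ e < L, ∑ i, (p ^ (e + 1) - 1) / A i < p * ∑ i, (p ^ e - 1) / A i + p) :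
    ∀ e ≤ L, ∀ t, ∑ i, (p ^ e - 1) / A i / p ^ t = (∑ i, (p ^ e - 1) / A i) / p ^ t := by
  intro e
  induction e with
  | zero => intro _ t; simp
  | succ e ih =>
    intro he
    have h := good_step hp (fun i => (p ^ e - 1) / A i) (fun i => (p ^ (e + 1) - 1) / A i % p)
      (ih (by omega))
    have hdec : ∀ i, p * ((p ^ e - 1) / A i) + (p ^ (e + 1) - 1) / A i % p =
        (p ^ (e + 1) - 1) / A i := by
      intro i
      rw [← K_step hp (A i) e]; exact Nat.div_add_mod _ _
    simp only [hdec] at h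
    apply h
    have h2 := hL e (by omega)
    have h3 : ∑ i, (p ^ (e + 1) - 1) / A i = p * ∑ i, (p ^ e - 1) / A i +
        ∑ i, (p ^ (e + 1) - 1) / A i % p := by
      rw [Finset.mul_sum, ← Finset.sum_add_distrib]
      exact Finset.sum_congr rfl fun i _ => (hdec i).symm
    omega

theorem nuA {p m : ℕ} (hp : p.Prime) {k : Type*} [Field k] [CharP k p] (A : Fin m → ℕ)
    (hA : ∀ i, 0 < A i) 
    (hL : ∀ e, ∑ i, (p ^ (e + 1) - 1) / A i < p * ∑ i, (p ^ e - 1) / A i + p) (e : ℕ) :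
    nu (∑ i : Fin m, (X i : MvPolynomial (Fin m) k) ^ A i) (p ^ e) = ∑ i, (p ^ e - 1) / A i := by
  unfold nu
  apply IsGreatest.csSup_eq
  constructor
  · rw [Set.mem_ofPred_eq, not_mem_iff (p := p) A hA]
    refine ⟨_, rfl, fun i => (le_K_iff hp.pos (hA i) _ _).mpr le_rfl, ?_⟩
    rw [mult_good hp]
    exact good_K hp.pos A e (fun e _ => hL e) e le_rfl
  · intro N hN
    rw [Set.mem_ofPred_eq, not_mem_iff (p := p) A hA] at hN
    obtain ⟨c, rfl, hc, _⟩ := hN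
    exact Finset.sum_le_sum fun i _ => (le_K_iff hp.pos (hA i) _ _).mp (hc i)

theorem nuB {p m : ℕ} (hp : p.Prime) {k : Type*} [Field k] [CharP k p] (A : Fin m → ℕ)
    (hA : ∀ i, 0 < A i) (L : ℕ)
    (hL : ∀ e < L, ∑ i, (p ^ (e + 1) - 1) / A i < p * ∑ i, (p ^ e - 1) / A i + p)
    (hL' : p * ∑ i, (p ^ L - 1) / A i + p ≤ ∑ i, (p ^ (L + 1) - 1) / A i) (u : ℕ) :
    nu (∑ i : Fin m, (X i : MvPolynomial (Fin m) k) ^ A i) (p ^ (L + 1 + u)) =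
      p ^ (u + 1) * (∑ i, (p ^ L - 1) / A i + 1) - 1 := by
  classical
  have hdec : ∀ e i, p * ((p ^ e - 1) / A i) + (p ^ (e + 1) - 1) / A i % p =
      (p ^ (e + 1) - 1) / A i := by
    intro e i
    rw [← K_step hp.pos (A i) e]; exact Nat.div_add_mod _ _
  have h3 : ∑ i, (p ^ (L + 1) - 1) / A i = p * ∑ i, (p ^ L - 1) / A i +
      ∑ i, (p ^ (L + 1) - 1) / A i % p := by
    rw [Finset.mul_sum, ← Finset.sum_add_distrib]
    exact Finset.sum_congr rfl fun i _ => (hdec L i).symm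
  have hp1 := hp.one_lt
  obtain ⟨r, hr, hrs⟩ := exists_sub_sum (fun i => (p ^ (L + 1) - 1) / A i % p) (p - 1) (by omega)
  obtain ⟨j, _, hj⟩ := Finset.exists_lt_of_sum_lt (s := Finset.univ) (f := r)
    (g := fun i => (p ^ (L + 1) - 1) / A i % p) (by omega)
  have key : ∀ u, ∃ c : Fin m → ℕ, (∀ t, ∑ i, c i / p ^ t = (∑ i, c i) / p ^ t) ∧
      (∀ i, c i ≤ (p ^ (L + 1 + u) - 1) / A i) ∧ c j < (p ^ (L + 1 + u) - 1) / A j ∧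
      ∑ i, c i + 1 = p ^ (u + 1) * (∑ i, (p ^ L - 1) / A i + 1) := by
    intro u
    induction u with
    | zero =>
      refine ⟨fun i => p * ((p ^ L - 1) / A i) + r i, ?_, ?_, ?_, ?_⟩
      · exact good_step hp.pos _ r (good_K hp.pos A L hL L le_rfl) (by omega)
      · intro i
        have := hr i
        have := hdec L i
        simp only [add_zero] at *
        omega
      · have := hdec L j
        simp only [add_zero] at *
        omega
      · rw [Finset.sum_add_distrib, hrs, ← Finset.mul_sum, zero_add, pow_one, mul_add]
        omega
    | succ u ih =>
      obtain ⟨c, h1, h2, h4, h5⟩ := ih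
      refine ⟨fun i => p * c i + if i = j then p - 1 else 0, ?_, ?_, ?_, ?_⟩
      · exact good_step hp.pos c _ h1 (by simp; omega)
      · intro i
        have hd := hdec (L + 1 + u) i
        rw [add_assoc (L + 1)] at hd
        rw [← hd]
        by_cases h : i = j
        · subst h
          have := Nat.mul_le_mul_left p (Nat.succ_le_of_lt h4)
          rw [Nat.mul_succ] at this
          simp only [if_true]
          omega
        · have := Nat.mul_le_mul_left p (h2 i)
          simp only [h, if_false]
          omega
      · have hd := hdec (L + 1 + u) j
        rw [add_assoc (L + 1)] at hd
        rw [← hd]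
        have := Nat.mul_le_mul_left p (Nat.succ_le_of_lt h4)
        rw [Nat.mul_succ] at this
        simp only [if_true]
        omega
      · rw [Finset.sum_add_distrib, ← Finset.mul_sum, pow_succ' p (u + 1), mul_assoc, ← h5, mul_add]
        simp
        omega
  unfold nu
  apply IsGreatest.csSup_eq
  constructor
  · rw [Set.mem_ofPred_eq, not_mem_iff (p := p) A hA]
    obtain ⟨c, h1, h2, h4, h5⟩ := key u
    exact ⟨c, by omega, fun i => (le_K_iff hp.pos (hA i) _ _).mpr (h2 i), (mult_good hp c).mpr h1⟩
  · intro N hN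
    rw [Set.mem_ofPred_eq, not_mem_iff (p := p) A hA] at hN
    obtain ⟨c, rfl, hc, hg⟩ := hN
    rw [mult_good hp] at hg
    have hle : (∑ i, c i) / p ^ (u + 1) ≤ ∑ i, (p ^ L - 1) / A i := by
      rw [← hg]
      refine Finset.sum_le_sum fun i _ => ?_
      rw [← K_div hp.pos (A i) L (u + 1)]
      apply Nat.div_le_div_right
      have := (le_K_iff hp.pos (hA i) _ _).mp (hc i)
      rwa [show L + (u + 1) = L + 1 + u by ring]
    have := Nat.lt_mul_of_div_lt (Nat.lt_succ_of_le hle) (pow_pos hp.pos (u + 1))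
    rw [Nat.succ_eq_add_one] at this
    apply Nat.le_sub_one_of_lt
    linarith [mul_comm (p ^ (u + 1)) (∑ i, (p ^ L - 1) / A i + 1)]

theorem tendsto_K {p : ℕ} (hp : p.Prime) {a : ℕ} (ha : 0 < a) :
    Tendsto (fun e : ℕ => (((p ^ e - 1) / a : ℕ) : ℝ) / (p : ℝ) ^ e) atTop (nhds (1 / (a : ℝ))) := by
  have hp1 : (1 : ℝ) < p := by exact_mod_cast hp.one_lt
  have haR : (0 : ℝ) < a := by exact_mod_cast ha
  have h0 : Tendsto (fun e : ℕ => 1 / (a : ℝ) - 1 / (p : ℝ) ^ e) atTop (nhds (1 / (a : ℝ))) := by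
    have := tendsto_pow_atTop_atTop_of_one_lt hp1
    have h := this.inv_tendsto_atTop
    have h' := (tendsto_const_nhds (x := 1 / (a : ℝ))).sub h
    simpa using h'
  refine tendsto_of_tendsto_of_tendsto_of_le_of_le h0 tendsto_const_nhds ?_ ?_
  · intro e
    have hpe : (0 : ℝ) < (p : ℝ) ^ e := by positivity
    have h1 : ¬ (a * ((p ^ e - 1) / a + 1) < p ^ e) := by
      rw [le_K_iff hp.pos ha]; omega
    have h2 : (p : ℝ) ^ e ≤ a * ((((p ^ e - 1) / a : ℕ) : ℝ) + 1) := by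
      exact_mod_cast not_lt.mp h1
    simp only
    rw [sub_le_iff_le_add, ← add_div, div_le_div_iff₀ haR hpe]
    linarith
  · intro e
    have hpe : (0 : ℝ) < (p : ℝ) ^ e := by positivity
    have h1 : a * ((p ^ e - 1) / a) < p ^ e := by
      rw [le_K_iff hp.pos ha]
    have h2 : a * (((p ^ e - 1) / a : ℕ) : ℝ) < (p : ℝ) ^ e := by
      exact_mod_cast h1
    simp only
    rw [div_le_div_iff₀ hpe haR]
    linarith

theorem trunc_eq {p : ℕ} (hp : p.Prime) {a : ℕ} (ha : 0 < a) (L : ℕ) :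
    trunc p (1 / (a : ℚ)) L = (((p ^ L - 1) / a : ℕ) : ℚ) / (p : ℚ) ^ L := by
  unfold trunc
  congr 1
  have haQ : (0 : ℚ) < a := by exact_mod_cast ha
  have h1 : ¬ (a * ((p ^ L - 1) / a + 1) < p ^ L) := by
    rw [le_K_iff hp.pos ha]; omega
  have h2 : a * ((p ^ L - 1) / a) < p ^ L := by
    rw [le_K_iff hp.pos ha]
  have h1' : (p : ℚ) ^ L ≤ a * ((((p ^ L - 1) / a : ℕ) : ℚ) + 1) := by
    exact_mod_cast not_lt.mp h1
  have h2' : a * (((p ^ L - 1) / a : ℕ) : ℚ) < (p : ℚ) ^ L := by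
    exact_mod_cast h2
  have : ⌈(p : ℚ) ^ L * (1 / (a : ℚ))⌉ = (((p ^ L - 1) / a : ℕ) : ℤ) + 1 := by
    rw [Int.ceil_eq_iff]
    rw [mul_one_div, div_le_iff₀ haQ, lt_div_iff₀ haQ]
    simp only [Int.cast_add, Int.cast_natCast, Int.cast_one]
    constructor <;> linarith
  rw [this]
  simp only [Int.cast_add, Int.cast_natCast, Int.cast_one]
  ring

theorem fpt_cases {p m : ℕ} (hp : p.Prime) {k : Type*} [Field k] [CharP k p] (A : Fin m → ℕ)
    (hA : ∀ i, 0 < A i) (F : ℚ)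
    (hF : Tendsto (fun e : ℕ =>
        (nu (∑ i : Fin m, (X i : MvPolynomial (Fin m) k) ^ A i) (p ^ (e + 1)) : ℝ) /
          (p : ℝ) ^ (e + 1)) atTop (nhds (F : ℝ))) :
    F = ∑ i, 1 / (A i : ℚ) ∨ ∃ L,
      (∀ e < L, ∑ i, (p ^ (e + 1) - 1) / A i < p * ∑ i, (p ^ e - 1) / A i + p) ∧
      (p * ∑ i, (p ^ L - 1) / A i + p ≤ ∑ i, (p ^ (L + 1) - 1) / A i) ∧
      F = ((∑ i, (p ^ L - 1) / A i + 1 : ℕ) : ℚ) / (p : ℚ) ^ L := by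
  classical
  have hp0 : (0 : ℝ) < p := by exact_mod_cast hp.pos
  by_cases h : ∀ e, ∑ i, (p ^ (e + 1) - 1) / A i < p * ∑ i, (p ^ e - 1) / A i + p
  · left
    simp only [nuA hp A hA h] at hF
    have h1 : Tendsto (fun e : ℕ => ((∑ i, (p ^ (e + 1) - 1) / A i : ℕ) : ℝ) / (p : ℝ) ^ (e + 1))
        atTop (nhds (∑ i, 1 / (A i : ℝ))) := by
      simp only [Nat.cast_sum, Finset.sum_div]
      exact tendsto_finsetSum _ fun i _ => (tendsto_K hp (hA i)).comp (tendsto_add_atTop_nat 1)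
    have := tendsto_nhds_unique hF h1
    apply Rat.cast_injective (α := ℝ)
    rw [this]
    push_cast
    rfl
  · right
    push Not at h
    refine ⟨Nat.find h, fun e he => not_le.mp (Nat.find_min h he), Nat.find_spec h, ?_⟩
    set L := Nat.find h with hLdef
    have hB := nuB (k := k) hp A hA L (fun e he => not_le.mp (Nat.find_min h he)) (Nat.find_spec h)
    set S := ∑ i, (p ^ L - 1) / A i
    have h1 := hF.comp (tendsto_add_atTop_nat L)
    have h2 : Tendsto (fun u : ℕ => ((S : ℝ) + 1) / (p : ℝ) ^ L - 1 / (p : ℝ) ^ (u + L + 1)) atTop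
        (nhds (F : ℝ)) := by
      refine h1.congr fun u => ?_
      simp only [Function.comp]
      have : u + L + 1 = L + 1 + u := by ring
      rw [this, hB u, Nat.cast_sub]
      · push_cast
        rw [show L + 1 + u = L + (u + 1) by ring, pow_add]
        field_simp
        ring
      · exact Nat.mul_pos (pow_pos hp.pos _) (Nat.succ_pos _)
    have hp1 : (1 : ℝ) < p := by exact_mod_cast hp.one_lt
    have h3 : Tendsto (fun u : ℕ => ((S : ℝ) + 1) / (p : ℝ) ^ L - 1 / (p : ℝ) ^ (u + L + 1)) atTop
        (nhds (((S : ℝ) + 1) / (p : ℝ) ^ L)) := by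
      have h := ((tendsto_pow_atTop_atTop_of_one_lt hp1).inv_tendsto_atTop).comp
        (tendsto_add_atTop_nat (L + 1))
      have h' := (tendsto_const_nhds (x := ((S : ℝ) + 1) / (p : ℝ) ^ L)).sub h
      simpa [Function.comp_def, add_assoc] using h'
    have := tendsto_nhds_unique h2 h3
    apply Rat.cast_injective (α := ℝ)
    rw [this, Rat.cast_div, Rat.cast_natCast, Nat.cast_add, Rat.cast_pow, Rat.cast_natCast,
      Nat.cast_one]

/-- For `f_n = x_1^a + x_2^b + x_3^n + … + x_m^n`, if `p ≡ 1 (mod lcm(a,b))` and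
`p^d ≤ n < p^{d+1}` with `d ≥ 1`, then either `fpt(f_n) = 1/a + 1/b + (m-2)/n`,
or there is `L ≥ d` with
`fpt(f_n) = ⟨1/a⟩_L + ⟨1/b⟩_L + (m-2)⟨1/n⟩_L + p^{-L}`, in which case the
denominator of `fpt(f_n)` in lowest terms is `p^L`. -/
theorem stmt4 {p m n a b d : ℕ} (hp : p.Prime) {k : Type*} [Field k] [PerfectField k]
    [CharP k p] (hm : 2 < m)
    (ha : 1 < a) (hab : a ≤ b) (hne : ¬(a = 2 ∧ b = 2)) (hn : b ≤ n)
    (hpmod : (p : ℤ) ≡ 1 [ZMOD (Nat.lcm a b : ℤ)])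
    (hd : 0 < d) (hdn : p ^ d ≤ n) (hnd : n < p ^ (d + 1))
    (F : ℚ)
    (hF : Tendsto (fun e : ℕ =>
        (nu (∑ i : Fin m, (X i : MvPolynomial (Fin m) k) ^
            (if (i : ℕ) = 0 then a else if (i : ℕ) = 1 then b else n)) (p ^ (e + 1)) : ℝ) /
          (p : ℝ) ^ (e + 1))
      atTop (nhds (F : ℝ))) :
    F = 1 / (a : ℚ) + 1 / (b : ℚ) + ((m : ℚ) - 2) / (n : ℚ) ∨
      ∃ L : ℕ, d ≤ L ∧
        F = trunc p (1 / (a : ℚ)) L + trunc p (1 / (b : ℚ)) L +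
          ((m : ℚ) - 2) * trunc p (1 / (n : ℚ)) L + 1 / (p : ℚ) ^ L ∧
        F.den = p ^ L := by
  obtain ⟨m', rfl⟩ : ∃ m', m = m' + 2 := ⟨m - 2, by omega⟩
  have hp1 := hp.one_lt
  have hapos : 0 < a := by omega
  have hbpos : 0 < b := by omega
  have hnpos : 0 < n := by omega
  have hdvd : Nat.lcm a b ∣ p - 1 := by
    have h := hpmod.symm.dvd
    have h2 : ((p - 1 : ℕ) : ℤ) = (p : ℤ) - 1 := by
      rw [Nat.cast_sub hp1.le]; simp
    rw [← h2] at h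
    exact_mod_cast h
  obtain ⟨x, hx⟩ := (Nat.dvd_lcm_left a b).trans hdvd
  obtain ⟨y, hy⟩ := (Nat.dvd_lcm_right a b).trans hdvd
  have hxy : x + y + 1 < p := by
    have h1 : 2 * x ≤ a * x := Nat.mul_le_mul_right _ (by omega)
    have h2 : 3 * y ≤ b * y := Nat.mul_le_mul_right _ (by omega)
    omega
  have hrec : ∀ c z, 0 < c → p - 1 = c * z → ∀ e,
      (p ^ (e + 1) - 1) / c = p * ((p ^ e - 1) / c) + z := by
    intro c z hc hz e
    have h1 : c ∣ p ^ e - 1 := by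
      have h := Nat.sub_dvd_pow_sub_pow p 1 e
      rw [one_pow] at h
      exact (Dvd.intro z hz.symm).trans h
    obtain ⟨w, hw⟩ := h1
    have hpe : 0 < p ^ e := pow_pos hp.pos e
    have h2 : p ^ (e + 1) - 1 = c * (p * w + z) := by
      have h3 : p ^ e = c * w + 1 := by omega
      rw [pow_succ', h3, mul_add c, ← hz, mul_add p, mul_left_comm c p w]
      omega
    rw [h2, hw, Nat.mul_div_cancel_left _ hc, Nat.mul_div_cancel_left _ hc]
  set A : Fin (m' + 2) → ℕ := fun i => if (i : ℕ) = 0 then a else if (i : ℕ) = 1 then b else n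
    with hAdef
  have hA : ∀ i, 0 < A i := by
    intro i
    simp only [hAdef]
    split_ifs <;> assumption
  have hS : ∀ e, ∑ i, (p ^ e - 1) / A i =
      (p ^ e - 1) / a + (p ^ e - 1) / b + m' * ((p ^ e - 1) / n) := by
    intro e
    rw [Fin.sum_univ_succ, Fin.sum_univ_succ]
    simp [hAdef, add_assoc]
  have hn0 : ∀ e ≤ d, (p ^ e - 1) / n = 0 := by
    intro e he
    apply Nat.div_eq_of_lt
    have := Nat.pow_le_pow_right hp.pos he
    omega
  have hSd : ∀ e < d, ∑ i, (p ^ (e + 1) - 1) / A i = p * ∑ i, (p ^ e - 1) / A i + (x + y) := by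
    intro e he
    rw [hS, hS, hn0 _ he.le, hn0 _ (by omega), hrec a x hapos hx e, hrec b y hbpos hy e]
    ring
  rcases fpt_cases (k := k) hp A hA F hF with h | ⟨L, hL, hL', hFL⟩
  · left
    rw [h, Fin.sum_univ_succ, Fin.sum_univ_succ]
    simp [hAdef, div_eq_mul_inv, add_assoc]
  · right
    have hdL : d ≤ L := by
      by_contra hlt
      have := hSd L (by omega)
      omega
    have hmono : ∀ e, p * ∑ i, (p ^ e - 1) / A i ≤ ∑ i, (p ^ (e + 1) - 1) / A i := by
      intro e
      rw [Finset.mul_sum]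
      refine Finset.sum_le_sum fun i _ => ?_
      rw [← K_step hp.pos (A i) e]
      exact Nat.mul_div_le _ _
    have key : ∀ L, d ≤ L →
        (∀ e < L, ∑ i, (p ^ (e + 1) - 1) / A i < p * ∑ i, (p ^ e - 1) / A i + p) →
        F = ((∑ i, (p ^ L - 1) / A i + 1 : ℕ) : ℚ) / (p : ℚ) ^ L →
        ∃ L', d ≤ L' ∧ F = ((∑ i, (p ^ L' - 1) / A i + 1 : ℕ) : ℚ) / (p : ℚ) ^ L' ∧
          ¬ p ∣ ∑ i, (p ^ L' - 1) / A i + 1 := by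
      intro L hdL
      induction L, hdL using Nat.le_induction with
      | base =>
        intro _ hFd
        refine ⟨d, le_rfl, hFd, ?_⟩
        obtain ⟨d', rfl⟩ : ∃ d', d = d' + 1 := ⟨d - 1, by omega⟩
        rw [hSd d' (by omega), add_assoc, Nat.dvd_add_right (Dvd.intro _ rfl)]
        intro h
        have := Nat.le_of_dvd (by omega) h
        omega
      | succ L hdL ih =>
        intro hcar hFL
        by_cases hdiv : p ∣ ∑ i, (p ^ (L + 1) - 1) / A i + 1
        · apply ih (fun e he => hcar e (by omega))
          have h1 := hmono L
          have h2 := hcar L (by omega)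
          obtain ⟨c, hc⟩ := Nat.exists_eq_add_of_le h1
          rw [hc, add_assoc, Nat.dvd_add_right (Dvd.intro _ rfl)] at hdiv
          have h3 := Nat.le_of_dvd (by omega) hdiv
          have h4 : ∑ i, (p ^ (L + 1) - 1) / A i + 1 = p * (∑ i, (p ^ L - 1) / A i + 1) := by
            rw [mul_add]; omega
          rw [h4] at hFL
          rw [hFL, pow_succ', Nat.cast_mul, mul_div_mul_left]
          exact_mod_cast hp.ne_zero
        · exact ⟨L + 1, by omega, hFL, hdiv⟩
    obtain ⟨L', h1, h2, h3⟩ := key L hdL hL hFL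
    refine ⟨L', h1, ?_, ?_⟩
    · rw [h2, hS, trunc_eq hp hapos, trunc_eq hp hbpos, trunc_eq hp hnpos]
      simp only [Nat.cast_add, Nat.cast_mul, Nat.cast_one, Nat.cast_ofNat]
      ring
    · have hcop : Nat.Coprime (∑ i, (p ^ L' - 1) / A i + 1) (p ^ L') :=
        Nat.Coprime.pow_right _ ((hp.coprime_iff_not_dvd.mpr h3).symm)
      have h4 := Rat.den_div_eq_of_coprime (a := ((∑ i, (p ^ L' - 1) / A i + 1 : ℕ) : ℤ))
        (b := ((p ^ L' : ℕ) : ℤ)) (by exact_mod_cast pow_pos hp.pos L') (by simpa only [Int.natAbs_natCast] using hcop)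
      rw [Int.cast_natCast, Int.cast_natCast, Nat.cast_pow, ← h2] at h4
      exact_mod_cast h4
end
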